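/- There exist constants C > 0 and t₀ > 0 such that for all t ∈ (0,t₀) and all δ > 0, | (4πt)^{11/2}·(sinh δ/δ)⁵·e^{−δ²/(4t)}·q_t(cosh δ) − 1 − (25 + 20(sinh δ − δ·cosh δ)/(δ²·sinh δ))·t | ≤ C·t². That is, q_t(cosh δ) = (1/(4πt)^{11/2})·(δ/sinh δ)⁵·e^{δ²/(4t)}·(1 + (25 + 20(sinh δ − δ cosh δ)/(δ² sinh δ))·t + t²·R₂(t,δ)) with R₂ uniformly bounded as t → 0 on δ ∈ [0,∞). -/

import Mathlib

open Real MeasureTheory Filter Topology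

/-- Jacobi polynomial `P_k^{3,b}` (with `b = m+3` octonionic, `b = m+1` quaternionic),
given by the polynomial extension of the Rodrigues formula. -/
noncomputable def jacP (k b : ℕ) : Polynomial ℝ :=
  Polynomial.C ((-1 : ℝ) ^ k / (2 ^ k * (Nat.factorial k : ℝ))) *
    (Polynomial.derivative^[k]
        ((1 - Polynomial.X) ^ (k + 3) * (1 + Polynomial.X) ^ (b + k)) /
      ((1 - Polynomial.X) ^ 3 * (1 + Polynomial.X) ^ b))

/-- Normalized eigenfunction `h_m` of the radial Laplacian on `S^7`. -/
noncomputable def hOct (m : ℕ) (η : ℝ) : ℝ :=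
  (Real.Gamma (7 / 2) / (Real.sqrt π * Real.Gamma 3)) *
    ∫ φ in (0 : ℝ)..π,
      (((Real.cos η : ℂ) + Complex.I * ((Real.sin η * Real.cos φ : ℝ) : ℂ)) ^ m).re *
        (Real.sin φ) ^ 5

/-- Coefficient `α_{k,m}`. -/
noncomputable def alphOct (k m : ℕ) : ℝ :=
  (96 / π ^ 8) * (m + 3) * (2 * k + m + 7) *
    (Nat.choose (k + m + 6) (k + m + 3)) * (Nat.choose (m + 5) m)

/-- Subelliptic heat kernel of the octonionic Hopf fibration, in cylindric coordinates. -/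
noncomputable def pOct (t r η : ℝ) : ℝ :=
  ∑' m : ℕ, ∑' k : ℕ,
    alphOct k m * hOct m η * Real.exp (-(4 * ((k * (k + m + 7) + 2 * m : ℕ) : ℝ)) * t) *
      (Real.cos r) ^ m * (jacP k (m + 3)).eval (Real.cos (2 * r))

/-- Coefficient `β_{k,m}` of the quaternionic heat kernel. -/
noncomputable def betQ (k m : ℕ) : ℝ :=
  (Real.Gamma 4 / (2 * π ^ 6)) * (2 * k + m + 5) * (m + 1) *
    (Nat.choose (k + m + 4) (k + m + 1))

/-- Subelliptic heat kernel of the quaternionic Hopf fibration on `S^11`. -/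
noncomputable def pQuat (t r η : ℝ) : ℝ :=
  ∑' m : ℕ, ∑' k : ℕ,
    betQ k m * Real.exp (-(4 * ((k * (k + m + 5) + 2 * m : ℕ) : ℝ)) * t) *
      (Real.sin ((m + 1) * η) / Real.sin η) *
      (Real.cos r) ^ m * (jacP k (m + 1)).eval (Real.cos (2 * r))

/-- Gegenbauer polynomial `C_m^5` (polynomial extension to all real `x`). -/
noncomputable def geg5 (m : ℕ) (x : ℝ) : ℝ :=
  ∑ j ∈ Finset.range (m / 2 + 1),
    (-1 : ℝ) ^ j * (Nat.factorial (m - j + 4)) /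
      ((Nat.factorial 4) * (Nat.factorial j) * (Nat.factorial (m - 2 * j))) * (2 * x) ^ (m - 2 * j)

/-- Radial heat kernel of the round sphere `S^11`, as a function of `cos δ`. -/
noncomputable def qS11 (t x : ℝ) : ℝ :=
  (Real.Gamma 5 / (2 * π ^ 6)) *
    ∑' m : ℕ, (m + 5) * Real.exp (-((m * (m + 10) : ℕ) : ℝ) * t) * geg5 m x

/-- The kernel `g_t(η,y)` appearing in the integral representation. -/
noncomputable def gInt (t η y : ℝ) : ℝ :=
  (Real.sin η)⁻¹ ^ 3 *
    (Real.cos (η * y / (2 * t)) * (2 * y) * (η - 3 * t * Real.cot η) +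
      Real.sin (η * y / (2 * t)) *
        (8 * t ^ 2 * Real.cot η ^ 2 + 4 * t ^ 2 * ((Real.sin η)⁻¹) ^ 2 -
          6 * t * η * Real.cot η + 2 * t + η ^ 2 - y ^ 2))

/-- Theta-type function `V(t,δ)`. -/
noncomputable def Vtheta (t δ : ℝ) : ℝ :=
  (1 / Real.sqrt (4 * π * t)) * ∑' k : ℤ, Real.exp (-(δ - 2 * k * π) ^ 2 / (4 * t))

/-- The operator `f ↦ -(1/(2π sin δ)) f'`. -/
noncomputable def Dop (f : ℝ → ℝ) : ℝ → ℝ :=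
  fun δ => -(1 / (2 * π * Real.sin δ)) * deriv f δ

/-!
The heat kernel of `S^{2l+3}` is `exp ((l+1)² t) / (2π)^{l+2}` times the `(l+1)`-st derivative in
`x` of the theta series `∑ n : ℤ, exp (-t n²) T_n(x)`, since Gegenbauer polynomials are derivatives
of Chebyshev polynomials. Put `x = cosh √u`, and let `N_k(t, u)` be the `k`-th derivative of the
series, normalised by its expected leading term. By Poisson summation `N_0 - 1` is a sum of terms
`2 exp (-π² n² / t) cos (π n √u / t)`, which is `O(t²)` together with all its `u`-derivatives,
uniformly in `u > 0`. The chain rule gives `N_{k+1} = N_k + 4t (∂_u N_k - k r N_k)`, where `r` is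
the logarithmic derivative of `sinh √u / √u`; as `r` and its derivatives are bounded, induction on
`k` yields `N_k = 1 - 4 (k choose 2) r t + O(t²)`. What has to be propagated is the bound on all
derivatives, because each step consumes one of them.
-/

open Asymptotics Polynomial Set
open Finset.HasAntidiagonal (antidiagonal)
open scoped Nat

/-! ### Entire power series and the derivatives of `v ↦ cosh √v` -/

theorem hasDerivAt_tsum_mul_pow {𝕜 : Type*} [RCLike 𝕜] {a : ℕ → 𝕜}
    (ha : ∀ x : 𝕜, Summable fun n : ℕ ↦ (n + 1) * a (n + 1) * x ^ n) (x : 𝕜) :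
    HasDerivAt (fun y ↦ ∑' n, a n * y ^ n) (∑' n : ℕ, (n + 1) * a (n + 1) * x ^ n) x := by
  have hshift (y : 𝕜) (n : ℕ) : a (n + 1) * ((n + 1 : ℕ) * y ^ (n + 1 - 1)) =
      (n + 1) * a (n + 1) * y ^ n := by push_cast [Nat.add_sub_cancel]; ring
  have hsum (y : 𝕜) : Summable fun n : ℕ ↦ a n * (n * y ^ (n - 1)) :=
    (summable_nat_add_iff 1).1 <| by simpa only [hshift] using ha y
  have hx : x ∈ Metric.ball (0 : 𝕜) (‖x‖ + 1) := by simp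
  have h := hasDerivAt_tsum_of_isPreconnected (g := fun n y ↦ a n * y ^ n)
    (g' := fun n y ↦ a n * (n * y ^ (n - 1))) (hsum ((‖x‖ + 1 : ℝ) : 𝕜)).norm Metric.isOpen_ball
    (convex_ball _ _).isPreconnected (fun n y _ ↦ (hasDerivAt_pow n y).const_mul _)
    (fun n y hy ↦ ?_) (Metric.mem_ball_self (by positivity))
    (summable_of_ne_finset_zero (s := {0}) fun n hn ↦ by simp_all) hx
  · rw [(hsum x).tsum_eq_zero_add] at h
    simpa only [hshift, Nat.cast_zero, zero_mul, mul_zero, zero_add] using h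
  · have hy' : ‖y‖ ≤ ‖x‖ + 1 := (mem_ball_zero_iff.1 hy).le
    rw [norm_mul, norm_mul, norm_pow, norm_mul, norm_mul, norm_pow,
      RCLike.norm_of_nonneg (by positivity : 0 ≤ ‖x‖ + 1)]
    gcongr

/-- The `k`-th Taylor coefficient at `0` of the `j`-th derivative of `v ↦ cosh √v`. -/
noncomputable def coshSqrtCoeff (j k : ℕ) : ℝ := (k + j)! / (k ! * (2 * (k + j))!)

/-- The `j`-th derivative of the entire function equal to `cosh √v` for `0 ≤ v` and to `cos √(-v)`
for `v ≤ 0`; defined by its power series, so that no square root is differentiated. -/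
noncomputable def coshSqrt (j : ℕ) (v : ℝ) : ℝ := ∑' k, coshSqrtCoeff j k * v ^ k

theorem coshSqrtCoeff_pos (j k : ℕ) : 0 < coshSqrtCoeff j k := by
  unfold coshSqrtCoeff; positivity

theorem coshSqrtCoeff_zero (k : ℕ) : coshSqrtCoeff 0 k = ((2 * k)! : ℝ)⁻¹ := by
  unfold coshSqrtCoeff
  field_simp
  simp

theorem succ_mul_coshSqrtCoeff_succ (j k : ℕ) :
    (k + 1) * coshSqrtCoeff j (k + 1) = coshSqrtCoeff (j + 1) k := by
  unfold coshSqrtCoeff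
  rw [show k + 1 + j = k + (j + 1) by ring, Nat.factorial_succ k]
  push_cast
  field_simp

theorem coshSqrtCoeff_succ_mul (j k : ℕ) :
    coshSqrtCoeff (j + 1) k * (4 * k + 4 * j + 2) = coshSqrtCoeff j k := by
  unfold coshSqrtCoeff
  rw [← add_assoc k j 1, show 2 * (k + j + 1) = 2 * (k + j) + 1 + 1 by ring]
  simp only [Nat.factorial_succ]
  push_cast
  field_simp
  ring

theorem two_mul_coshSqrtCoeff_one (k : ℕ) : 2 * coshSqrtCoeff 1 k = ((2 * k + 1)! : ℝ)⁻¹ := by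
  have h : coshSqrtCoeff 1 k * (4 * k + 2) = ((2 * k)! : ℝ)⁻¹ := by
    simpa [coshSqrtCoeff_zero] using coshSqrtCoeff_succ_mul 0 k
  rw [Nat.factorial_succ, Nat.cast_mul, mul_inv, ← h]
  push_cast
  field_simp
  ring

theorem antitone_coshSqrtCoeff (k : ℕ) : Antitone fun j ↦ coshSqrtCoeff j k :=
  antitone_nat_of_succ_le fun j ↦ by
    rw [← coshSqrtCoeff_succ_mul j k]
    have hnonneg : (0 : ℝ) ≤ 4 * k + 4 * j := by positivity
    exact le_mul_of_one_le_right (coshSqrtCoeff_pos _ _).le (by linarith [hnonneg])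

theorem summable_coshSqrt (j : ℕ) (v : ℝ) : Summable fun k ↦ coshSqrtCoeff j k * v ^ k := by
  refine .of_norm_bounded (summable_pow_div_factorial |v|) fun k ↦ ?_
  have hle : coshSqrtCoeff j k ≤ (k ! : ℝ)⁻¹ := by
    refine (antitone_coshSqrtCoeff k j.zero_le).trans ?_
    simp only [coshSqrtCoeff_zero]
    gcongr
    omega
  rw [norm_mul, norm_pow, norm_of_nonneg (coshSqrtCoeff_pos j k).le, div_eq_inv_mul]
  gcongr
  exact le_rfl

theorem hasDerivAt_coshSqrt (j : ℕ) (v : ℝ) :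
    HasDerivAt (coshSqrt j) (coshSqrt (j + 1) v) v := by
  have h := hasDerivAt_tsum_mul_pow (a := coshSqrtCoeff j)
    (by simpa only [succ_mul_coshSqrtCoeff_succ] using summable_coshSqrt (j + 1)) v
  simp only [succ_mul_coshSqrtCoeff_succ] at h
  exact h

theorem continuous_coshSqrt (j : ℕ) : Continuous (coshSqrt j) :=
  continuous_iff_continuousAt.2 fun v ↦ (hasDerivAt_coshSqrt j v).continuousAt

theorem coshSqrt_pos (j : ℕ) {v : ℝ} (hv : 0 ≤ v) : 0 < coshSqrt j v :=
  (summable_coshSqrt j v).tsum_pos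
    (fun k ↦ mul_nonneg (coshSqrtCoeff_pos j k).le (pow_nonneg hv k)) 0
    (by simpa using coshSqrtCoeff_pos j 0)

theorem antitone_coshSqrt {v : ℝ} (hv : 0 ≤ v) : Antitone fun j ↦ coshSqrt j v := fun i j hij ↦
  (summable_coshSqrt j v).tsum_le_tsum
    (fun k ↦ mul_le_mul_of_nonneg_right (antitone_coshSqrtCoeff k hij) (pow_nonneg hv k))
    (summable_coshSqrt i v)

theorem coshSqrt_zero_sq (x : ℝ) : coshSqrt 0 (x ^ 2) = cosh x := by
  rw [← (hasSum_cosh x).tsum_eq]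
  exact tsum_congr fun k ↦ by rw [coshSqrtCoeff_zero, ← pow_mul]; ring

theorem coshSqrt_zero_neg_sq (x : ℝ) : coshSqrt 0 (-x ^ 2) = cos x := by
  rw [← (hasSum_cos x).tsum_eq]
  exact tsum_congr fun k ↦ by rw [coshSqrtCoeff_zero, neg_pow, ← pow_mul]; ring

theorem two_mul_coshSqrt_one_sq (x : ℝ) : 2 * x * coshSqrt 1 (x ^ 2) = sinh x := by
  rw [← (hasSum_sinh x).tsum_eq, coshSqrt, ← tsum_mul_left]
  refine tsum_congr fun k ↦ ?_
  linear_combination x * (x ^ 2) ^ k * two_mul_coshSqrtCoeff_one k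

theorem two_mul_coshSqrt_one_neg_sq (x : ℝ) : 2 * x * coshSqrt 1 (-x ^ 2) = sin x := by
  rw [← (hasSum_sin x).tsum_eq, coshSqrt, ← tsum_mul_left]
  refine tsum_congr fun k ↦ ?_
  rw [neg_pow (x ^ 2)]
  linear_combination x * ((-1) ^ k * (x ^ 2) ^ k) * two_mul_coshSqrtCoeff_one k

theorem coshSqrt_recurrence (j : ℕ) (v : ℝ) :
    4 * v * coshSqrt (j + 2) v + (4 * j + 2) * coshSqrt (j + 1) v = coshSqrt j v := by
  have h₂ : HasSum (fun k : ℕ ↦ 4 * k * (coshSqrtCoeff (j + 1) k * v ^ k))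
      (4 * v * coshSqrt (j + 2) v) := by
    rw [← hasSum_nat_add_iff' 1, Finset.sum_range_one, Nat.cast_zero, mul_zero, zero_mul, sub_zero]
    convert! (summable_coshSqrt (j + 2) v).hasSum.mul_left (4 * v) using 2 with k
    rw [← succ_mul_coshSqrtCoeff_succ (j + 1) k]
    push_cast
    ring
  refine (h₂.add ((summable_coshSqrt (j + 1) v).hasSum.mul_left (4 * (j : ℝ) + 2))).unique ?_
  convert! (summable_coshSqrt j v).hasSum using 2 with k
  rw [← coshSqrtCoeff_succ_mul j k]
  ring

theorem isBigO_coshSqrt_one_of_Iic_neg_one {j : ℕ}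
    (h : coshSqrt j =O[𝓟 (Iic (-1))] fun _ ↦ (1 : ℝ)) :
    coshSqrt j =O[𝓟 (Iic 0)] fun _ ↦ (1 : ℝ) := by
  obtain ⟨C, hC⟩ := isCompact_Icc.exists_bound_of_continuousOn
    (continuous_coshSqrt j).continuousOn (s := Icc (-1) 0)
  have hIcc : coshSqrt j =O[𝓟 (Icc (-1) 0)] fun _ ↦ (1 : ℝ) :=
    isBigO_principal.2 ⟨C, by simpa using hC⟩
  rw [← Iic_union_Icc_eq_Iic (by simp : (-1 : ℝ) ≤ 0), ← sup_principal]
  exact h.sup hIcc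

theorem isBigO_coshSqrt_one (j : ℕ) :
    coshSqrt j =O[𝓟 (Iic 0)] fun _ ↦ (1 : ℝ) := by
  induction j using Nat.twoStepInduction with
  | zero =>
    refine isBigO_principal.2 ⟨1, fun v hv ↦ ?_⟩
    rw [← neg_neg v, ← sq_sqrt (neg_nonneg.2 hv), coshSqrt_zero_neg_sq]
    simpa using abs_cos_le_one √(-v)
  | one =>
    refine isBigO_coshSqrt_one_of_Iic_neg_one <| isBigO_principal.2 ⟨1, fun v (hv : v ≤ -1) ↦ ?_⟩
    have hx : 1 ≤ √(-v) := one_le_sqrt.2 (by linarith)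
    have hsin := abs_sin_le_one √(-v)
    rw [← two_mul_coshSqrt_one_neg_sq, sq_sqrt (by linarith), neg_neg, abs_mul,
      abs_of_pos (by positivity)] at hsin
    simp only [norm_eq_abs, abs_one]
    nlinarith [abs_nonneg (coshSqrt 1 v)]
  | more j h₀ h₁ =>
    refine isBigO_coshSqrt_one_of_Iic_neg_one ?_
    have hsub : (𝓟 (Iic (-1 : ℝ))) ≤ 𝓟 (Iic 0) :=
      principal_mono.2 <| Iic_subset_Iic.2 (by simp)
    refine .trans (isBigO_principal.2 ⟨1, fun v (hv : v ≤ -1) ↦ ?_⟩)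
      ((h₀.mono hsub).sub ((h₁.mono hsub).const_mul_left (4 * j + 2)))
    rw [← coshSqrt_recurrence j v, add_sub_cancel_right, norm_mul, one_mul]
    exact le_mul_of_one_le_left (norm_nonneg _) (by rw [norm_eq_abs, le_abs]; right; linarith)

/-! ### Bounds on derivatives, uniform in a parameter -/

/-- `f t = O(g t)` as functions on `s`, together with their first `n` derivatives and uniformly
in the parameter `t ∈ T`. This is the sense in which all remainders below are small: it is stable
under differentiation in `u ∈ s` at the price of lowering `n`. -/
def DerivIsBigO {ι : Type*} (T : Set ι) (s : Set ℝ) : ℕ → (ι → ℝ → ℝ) → (ι → ℝ) → Prop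
  | 0, f, g => (fun p : ι × ℝ ↦ f p.1 p.2) =O[𝓟 (T ×ˢ s)] fun p ↦ g p.1
  | n + 1, f, g => ((fun p : ι × ℝ ↦ f p.1 p.2) =O[𝓟 (T ×ˢ s)] fun p ↦ g p.1) ∧
      ∃ f' : ι → ℝ → ℝ, (∀ t ∈ T, ∀ u ∈ s, HasDerivAt (f t) (f' t u) u) ∧ DerivIsBigO T s n f' g

namespace DerivIsBigO

variable {ι κ : Type*} {T : Set ι} {s : Set ℝ} {n : ℕ} {f f₁ f₂ : ι → ℝ → ℝ} {g g₁ g₂ : ι → ℝ}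

theorem isBigO (h : DerivIsBigO T s n f g) :
    (fun p : ι × ℝ ↦ f p.1 p.2) =O[𝓟 (T ×ˢ s)] fun p ↦ g p.1 := by
  cases n with
  | zero => exact h
  | succ n => exact h.1

theorem exists_bound (h : DerivIsBigO T s n f g) :
    ∃ C, ∀ t ∈ T, ∀ u ∈ s, ‖f t u‖ ≤ C * ‖g t‖ := by
  obtain ⟨C, hC⟩ := isBigO_principal.1 h.isBigO
  exact ⟨C, fun t ht u hu ↦ hC (t, u) ⟨ht, hu⟩⟩

theorem of_succ (h : DerivIsBigO T s (n + 1) f g) : DerivIsBigO T s n f g := by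
  induction n generalizing f with
  | zero => exact h.1
  | succ n ih =>
    obtain ⟨hf, f', hf', h'⟩ := h
    exact ⟨hf, f', hf', ih h'⟩

theorem congr (hs : IsOpen s) (hf : ∀ t ∈ T, ∀ u ∈ s, f₁ t u = f₂ t u)
    (h : DerivIsBigO T s n f₁ g) : DerivIsBigO T s n f₂ g := by
  have hO : (fun p : ι × ℝ ↦ f₂ p.1 p.2) =O[𝓟 (T ×ˢ s)] fun p ↦ g p.1 :=
    h.isBigO.congr' (eventuallyEq_principal.2 fun p hp ↦ hf p.1 hp.1 p.2 hp.2) .rfl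
  cases n with
  | zero => exact hO
  | succ n =>
    obtain ⟨-, f', hf', h'⟩ := h
    exact ⟨hO, f', fun t ht u hu ↦ (hf' t ht u hu).congr_of_eventuallyEq <|
      (hs.eventually_mem hu).mono fun v hv ↦ (hf t ht v hv).symm, h'⟩

theorem trans_isBigO (h : DerivIsBigO T s n f g₁) (hg : g₁ =O[𝓟 T] g₂) :
    DerivIsBigO T s n f g₂ := by
  have hg' : (fun p : ι × ℝ ↦ g₁ p.1) =O[𝓟 (T ×ˢ s)] fun p ↦ g₂ p.1 :=
    hg.comp_tendsto (tendsto_principal_principal.2 fun p hp ↦ hp.1)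
  induction n generalizing f with
  | zero => exact h.trans hg'
  | succ n ih =>
    obtain ⟨hf, f', hf', h'⟩ := h
    exact ⟨hf.trans hg', f', hf', ih h'⟩

theorem comp {T' : Set κ} {k : κ → ι} (hk : MapsTo k T' T) (h : DerivIsBigO T s n f g) :
    DerivIsBigO T' s n (f ∘ k) (g ∘ k) := by
  have htendsto : Tendsto (Prod.map k id) (𝓟 (T' ×ˢ s)) (𝓟 (T ×ˢ s)) :=
    tendsto_principal_principal.2 fun p hp ↦ ⟨hk hp.1, hp.2⟩
  induction n generalizing f with
  | zero => exact h.comp_tendsto htendsto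
  | succ n ih =>
    obtain ⟨hf, f', hf', h'⟩ := h
    exact ⟨hf.comp_tendsto htendsto, f' ∘ k, fun t ht ↦ hf' _ (hk ht), ih h'⟩

theorem add (h₁ : DerivIsBigO T s n f₁ g) (h₂ : DerivIsBigO T s n f₂ g) :
    DerivIsBigO T s n (fun t u ↦ f₁ t u + f₂ t u) g := by
  induction n generalizing f₁ f₂ with
  | zero => exact IsBigO.add h₁ h₂
  | succ n ih =>
    obtain ⟨hf₁, f₁', hf₁', h₁'⟩ := h₁
    obtain ⟨hf₂, f₂', hf₂', h₂'⟩ := h₂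
    exact ⟨hf₁.add hf₂, _, fun t ht u hu ↦ (hf₁' t ht u hu).add (hf₂' t ht u hu), ih h₁' h₂'⟩

theorem sub (h₁ : DerivIsBigO T s n f₁ g) (h₂ : DerivIsBigO T s n f₂ g) :
    DerivIsBigO T s n (fun t u ↦ f₁ t u - f₂ t u) g := by
  induction n generalizing f₁ f₂ with
  | zero => exact IsBigO.sub h₁ h₂
  | succ n ih =>
    obtain ⟨hf₁, f₁', hf₁', h₁'⟩ := h₁
    obtain ⟨hf₂, f₂', hf₂', h₂'⟩ := h₂
    exact ⟨hf₁.sub hf₂, _, fun t ht u hu ↦ (hf₁' t ht u hu).sub (hf₂' t ht u hu), ih h₁' h₂'⟩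

theorem mul (h₁ : DerivIsBigO T s n f₁ g₁) (h₂ : DerivIsBigO T s n f₂ g₂) :
    DerivIsBigO T s n (fun t u ↦ f₁ t u * f₂ t u) (fun t ↦ g₁ t * g₂ t) := by
  induction n generalizing f₁ f₂ with
  | zero => exact IsBigO.mul h₁ h₂
  | succ n ih =>
    have ⟨hf₁, f₁', hf₁', h₁'⟩ := h₁
    have ⟨hf₂, f₂', hf₂', h₂'⟩ := h₂
    exact ⟨hf₁.mul hf₂, _, fun t ht u hu ↦ (hf₁' t ht u hu).mul (hf₂' t ht u hu),
      (ih h₁' h₂.of_succ).add (ih h₁.of_succ h₂')⟩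

theorem const {c : ι → ℝ} (hc : c =O[𝓟 T] g) : DerivIsBigO T s n (fun t _ ↦ c t) g := by
  have hO {c : ι → ℝ} (hc : c =O[𝓟 T] g) :
      (fun p : ι × ℝ ↦ c p.1) =O[𝓟 (T ×ˢ s)] fun p ↦ g p.1 :=
    hc.comp_tendsto (tendsto_principal_principal.2 fun p hp ↦ hp.1)
  induction n generalizing c with
  | zero => exact hO hc
  | succ n ih => exact ⟨hO hc, _, fun t _ u _ ↦ hasDerivAt_const u (c t), ih (isBigO_zero _ _)⟩

theorem tsum {F : κ → ι → ℝ → ℝ} {a : κ → ℝ} (hs : IsOpen s) (hs' : IsPreconnected s)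
    (ha : Summable a)
    (h : DerivIsBigO (univ ×ˢ T) s n (fun p : κ × ι ↦ F p.1 p.2) fun p ↦ a p.1 * g p.2) :
    DerivIsBigO T s n (fun t u ↦ ∑' i, F i t u) g := by
  have hsum (C : ℝ) (t : ι) : Summable fun i ↦ C * ‖a i * g t‖ :=
    ((ha.mul_right (g t)).norm).mul_left C
  have hO {F : κ → ι → ℝ → ℝ} {n : ℕ}
      (h : DerivIsBigO (univ ×ˢ T) s n (fun p : κ × ι ↦ F p.1 p.2) fun p ↦ a p.1 * g p.2) :
      (fun p : ι × ℝ ↦ ∑' i, F i p.1 p.2) =O[𝓟 (T ×ˢ s)] fun p ↦ g p.1 := by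
    obtain ⟨C, hC⟩ := h.exists_bound
    refine isBigO_principal.2 ⟨C * ∑' i, ‖a i‖, fun p hp ↦ ?_⟩
    refine (tsum_of_norm_bounded (hsum C p.1).hasSum fun i ↦
      hC (i, p.1) ⟨mem_univ i, hp.1⟩ p.2 hp.2).trans_eq ?_
    simp_rw [norm_mul, ← mul_assoc, tsum_mul_right, tsum_mul_left]
  induction n generalizing F with
  | zero => exact hO h
  | succ n ih =>
    have ⟨_, F', hF', h'⟩ := h
    obtain ⟨C, hC⟩ := h.exists_bound
    obtain ⟨C', hC'⟩ := h'.exists_bound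
    refine ⟨hO h, fun t u ↦ ∑' i, F' (i, t) u, fun t ht u hu ↦ ?_, ih h'⟩
    exact hasDerivAt_tsum_of_isPreconnected (hsum C' t) hs hs'
      (fun i v hv ↦ hF' (i, t) ⟨mem_univ i, ht⟩ v hv)
      (fun i v hv ↦ hC' (i, t) ⟨mem_univ i, ht⟩ v hv) hu
      (.of_norm_bounded (hsum C t) fun i ↦ hC (i, t) ⟨mem_univ i, ht⟩ u hu) hu

end DerivIsBigO

theorem derivIsBigO_coshSqrt_neg_mul (j n : ℕ) :
    DerivIsBigO (Ici 0) (Ioi 0) n (fun c u ↦ coshSqrt j (-(c * u))) fun c ↦ (1 + c) ^ n := by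
  have hO (j : ℕ) : (fun p : ℝ × ℝ ↦ coshSqrt j (-(p.1 * p.2))) =O[𝓟 (Ici 0 ×ˢ Ioi 0)]
      fun _ ↦ (1 : ℝ) :=
    (isBigO_coshSqrt_one j).comp_tendsto <| tendsto_principal_principal.2 fun p hp ↦
      neg_nonpos.2 (mul_nonneg hp.1 (mem_Ioi.1 hp.2).le)
  induction n generalizing j with
  | zero => exact (hO j).congr_right fun c ↦ (pow_zero _).symm
  | succ n ih =>
    have hone : (fun _ ↦ (1 : ℝ)) =O[𝓟 (Ici 0 ×ˢ Ioi (0 : ℝ))]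
        fun p : ℝ × ℝ ↦ (1 + p.1) ^ (n + 1) :=
      isBigO_principal.2 ⟨1, fun p hp ↦ by
        rw [norm_one, one_mul, norm_pow]
        exact one_le_pow₀ ((by linarith [mem_Ici.1 hp.1] : 1 ≤ 1 + p.1).trans (le_abs_self _))⟩
    have hneg : (fun c : ℝ ↦ -c) =O[𝓟 (Ici 0)] fun c ↦ 1 + c :=
      isBigO_principal.2 ⟨1, fun c (hc : 0 ≤ c) ↦ by
        rw [norm_neg, norm_of_nonneg hc, norm_of_nonneg (by positivity)]
        linarith⟩
    refine ⟨(hO j).trans hone, fun c u ↦ -c * coshSqrt (j + 1) (-(c * u)), fun c _ u _ ↦ ?_, ?_⟩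
    · have h := (hasDerivAt_coshSqrt j _).comp u ((hasDerivAt_id' u).const_mul c).neg
      simpa [mul_comm, Function.comp_def] using h
    · simpa only [pow_succ'] using (DerivIsBigO.const hneg).mul (ih (j + 1))

/-- The ratio of the `(j + 1)`-st to the first derivative of `u ↦ cosh √u`; for `j = 1` it is the
logarithmic derivative of `u ↦ sinh √u / √u`, which carries the first-order heat coefficient. -/
noncomputable def coshSqrtRatio (j : ℕ) (u : ℝ) : ℝ := coshSqrt (j + 1) u / coshSqrt 1 u

theorem hasDerivAt_coshSqrtRatio (j : ℕ) {u : ℝ} (hu : 0 ≤ u) :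
    HasDerivAt (coshSqrtRatio j)
      (coshSqrtRatio (j + 1) u - coshSqrtRatio j u * coshSqrtRatio 1 u) u := by
  have h₁ := (coshSqrt_pos 1 hu).ne'
  convert! (hasDerivAt_coshSqrt (j + 1) u).div (hasDerivAt_coshSqrt 1 u) h₁ using 1
  simp only [coshSqrtRatio]
  field_simp

theorem abs_coshSqrtRatio_le_one (j : ℕ) {u : ℝ} (hu : 0 ≤ u) : |coshSqrtRatio j u| ≤ 1 := by
  rw [coshSqrtRatio, abs_of_pos (div_pos (coshSqrt_pos _ hu) (coshSqrt_pos _ hu))]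
  exact div_le_one_of_le₀ (antitone_coshSqrt hu (by omega)) (coshSqrt_pos 1 hu).le

theorem derivIsBigO_coshSqrtRatio {ι : Type*} (T : Set ι) (j n : ℕ) :
    DerivIsBigO T (Ioi 0) n (fun _ ↦ coshSqrtRatio j) fun _ ↦ 1 := by
  have hO (j : ℕ) : (fun p : ι × ℝ ↦ coshSqrtRatio j p.2) =O[𝓟 (T ×ˢ Ioi 0)] fun _ ↦ (1 : ℝ) :=
    isBigO_principal.2 ⟨1, fun p hp ↦ by
      simpa using abs_coshSqrtRatio_le_one j (mem_Ioi.1 hp.2).le⟩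
  induction n generalizing j with
  | zero => exact hO j
  | succ n ih =>
    refine ⟨hO j, _, fun _ _ u hu ↦ hasDerivAt_coshSqrtRatio j (mem_Ioi.1 hu).le, ?_⟩
    exact (ih (j + 1)).sub (by simpa using (ih j).mul (ih 1))

theorem neg_two_mul_coshSqrtRatio_one {x : ℝ} (hx : x ≠ 0) :
    -2 * coshSqrtRatio 1 (x ^ 2) = (sinh x - x * cosh x) / (x ^ 2 * sinh x) := by
  have h₁ := (coshSqrt_pos 1 (sq_nonneg x)).ne'
  have hode := coshSqrt_recurrence 0 (x ^ 2)
  rw [coshSqrtRatio, ← coshSqrt_zero_sq, ← two_mul_coshSqrt_one_sq, ← hode]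
  push_cast
  field_simp
  ring

/-! ### Gegenbauer polynomials of positive integer index -/

/-- The Gegenbauer polynomial `C_m^{(l+1)}`; the pair `(i, j)` in the sum is `(m - j, j)` in the
usual formula, and the terms with `i < j` vanish. -/
noncomputable def gegenbauer (R : Type*) [CommRing R] (l m : ℕ) : R[X] :=
  ∑ p ∈ antidiagonal m,
    (-1) ^ p.2 * (((p.1 + l).choose l * p.1.choose p.2 : ℕ) : R[X]) * (2 * X) ^ (p.1 - p.2)

section Gegenbauer

variable (R : Type*) [CommRing R]

theorem gegenbauer_zero_add_two (m : ℕ) :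
    gegenbauer R 0 (m + 2) = 2 * X * gegenbauer R 0 (m + 1) - gegenbauer R 0 m := by
  have hterm (i j : ℕ) : (-1) ^ (j + 1) * ((i + 1).choose (j + 1) : R[X]) * (2 * X) ^ (i - j) =
      2 * X * ((-1) ^ (j + 1) * (i.choose (j + 1) : R[X]) * (2 * X) ^ (i - (j + 1))) -
        (-1) ^ j * (i.choose j : R[X]) * (2 * X) ^ (i - j) := by
    rw [Nat.choose_succ_succ, Nat.cast_add]
    rcases lt_or_ge j i with hji | hij
    · rw [show i - j = i - (j + 1) + 1 by omega]
      ring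
    · rw [Nat.choose_eq_zero_of_lt (Nat.lt_succ_of_le hij)]
      ring
  simp only [gegenbauer, add_zero, Nat.choose_zero_right, one_mul]
  rw [Finset.Nat.sum_antidiagonal_succ, Finset.Nat.sum_antidiagonal_succ',
    Finset.Nat.sum_antidiagonal_succ', mul_add, Finset.mul_sum]
  simp only [Nat.add_sub_add_right, hterm, Finset.sum_sub_distrib, Nat.choose_zero_succ,
    Nat.choose_zero_right, Nat.cast_zero, Nat.cast_one, tsub_zero, pow_zero]
  ring

theorem gegenbauer_zero_eq_chebyshev_U (m : ℕ) :
    gegenbauer R 0 m = Chebyshev.U R m := by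
  induction m using Nat.twoStepInduction with
  | zero => simp [gegenbauer]
  | one => simp [gegenbauer, Finset.Nat.antidiagonal_succ]
  | more m h₀ h₁ => simp_rw [gegenbauer_zero_add_two, h₀, h₁, Nat.cast_add, Nat.cast_ofNat,
      Chebyshev.U_add_two, Nat.cast_one]

theorem derivative_gegenbauer (l m : ℕ) :
    derivative (gegenbauer R l (m + 1)) = (2 * (l + 1) : ℕ) * gegenbauer R (l + 1) m := by
  rw [gegenbauer, Finset.Nat.sum_antidiagonal_succ, gegenbauer, Finset.mul_sum, map_add, map_sum]
  have hchoose (i j : ℕ) : (i + 1 + l).choose l * (i + 1).choose j * (i + 1 - j) =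
      (l + 1) * ((i + (l + 1)).choose (l + 1) * i.choose j) := by
    have h := Nat.choose_succ_right_eq (i + (l + 1)) l
    rw [show i + (l + 1) - l = i + 1 by omega] at h
    rw [mul_assoc, ← Nat.choose_mul_succ_eq, add_assoc, add_comm 1 l]
    linear_combination -(i.choose j * h)
  simp only [Nat.choose_zero_succ, mul_zero, Nat.cast_zero, zero_mul, derivative_zero, zero_add]
  refine Finset.sum_congr rfl fun p _ ↦ ?_
  have hcast := congrArg (Nat.cast : ℕ → R[X]) (hchoose p.1 p.2)
  have hpow (n : ℕ) : derivative ((2 * X : R[X]) ^ n) = (n : R[X]) * (2 * X) ^ (n - 1) * 2 := by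
    rw [derivative_pow, derivative_mul, derivative_ofNat, derivative_X, zero_mul,
      zero_add, mul_one, C_eq_natCast]
  have hsign : (-1 : R[X]) ^ p.2 = (((-1) ^ p.2 : ℤ) : R[X]) := by push_cast; rfl
  rw [hsign, mul_assoc, derivative_intCast_mul, derivative_natCast_mul, hpow,
    show p.1 + 1 - p.2 - 1 = p.1 - p.2 by omega]
  push_cast at hcast ⊢
  linear_combination 2 * (-1) ^ p.2 * (2 * X) ^ (p.1 - p.2) * hcast

theorem iterate_derivative_gegenbauer (l m k : ℕ) :
    derivative^[k] (gegenbauer R l (m + k)) =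
      (2 ^ k * (l + 1).ascFactorial k : ℕ) * gegenbauer R (l + k) m := by
  induction k generalizing l with
  | zero => simp
  | succ k ih =>
    rw [← add_assoc, Function.iterate_succ_apply, derivative_gegenbauer,
      iterate_derivative_natCast_mul, ih, ← mul_assoc, ← Nat.cast_mul, Nat.ascFactorial_succ,
      add_right_comm l 1 k, add_assoc l k 1, pow_succ, mul_left_comm _ (2 ^ k),
      mul_assoc 2, Nat.succ_ascFactorial]
    congr 2
    ring

theorem iterate_derivative_chebyshev_T (l m : ℕ) :
    derivative^[l + 1] (Chebyshev.T R (m + l + 1 : ℕ)) =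
      ((m + l + 1) * (2 ^ l * l !) : ℕ) * gegenbauer R l m := by
  have hcast : ((m + l + 1 : ℕ) : ℤ) - 1 = (m + l : ℕ) := by push_cast; ring
  rw [Function.iterate_succ_apply, Chebyshev.T_derivative_eq_U, hcast, Int.cast_natCast,
    ← gegenbauer_zero_eq_chebyshev_U, iterate_derivative_natCast_mul,
    iterate_derivative_gegenbauer, zero_add, zero_add, Nat.one_ascFactorial]
  push_cast
  ring

end Gegenbauer

theorem eval_gegenbauer_four (m : ℕ) (x : ℝ) : (gegenbauer ℝ 4 m).eval x = geg5 m x := by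
  rw [gegenbauer, ← Finset.Nat.sum_antidiagonal_swap,
    Finset.Nat.sum_antidiagonal_eq_sum_range_succ_mk, eval_finsetSum, geg5]
  refine (Finset.sum_subset (Finset.range_subset_range.2 (by omega)) fun j _ hj ↦ ?_).symm.trans
    (Finset.sum_congr rfl fun j hj ↦ ?_)
  · rw [Finset.mem_range] at hj
    simp [Nat.choose_eq_zero_of_lt (show m - j < j by omega)]
  · have hjm : j ≤ m - j := by rw [Finset.mem_range] at hj; omega
    simp only [Prod.fst_swap, Prod.snd_swap, eval_mul, eval_pow, eval_natCast, eval_neg, eval_one,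
      eval_ofNat, eval_X, Nat.cast_mul, Nat.cast_choose ℝ hjm]
    rw [Nat.cast_choose ℝ (Nat.le_add_left 4 _), Nat.add_sub_cancel,
      show m - j - j = m - 2 * j by omega]
    field_simp

/-! ### Theta series with Chebyshev coefficients -/

theorem iterate_derivative_chebyshev_T_add_two (R : Type*) [CommRing R] (k n : ℕ) :
    derivative^[k] (Chebyshev.T R (n + 2 : ℕ)) =
      2 * (derivative^[k] (Chebyshev.T R (n + 1 : ℕ)) * X +
        k • derivative^[k - 1] (Chebyshev.T R (n + 1 : ℕ))) - derivative^[k] (Chebyshev.T R n) := by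
  rw [← iterate_derivative_mul_X, ← C_ofNat, ← iterate_derivative_C_mul, ← iterate_derivative_sub]
  congr 1
  push_cast
  rw [Chebyshev.T_add_two, C_ofNat]
  ring

theorem abs_eval_iterate_derivative_chebyshev_T_le (k : ℕ) (n : ℤ) (x : ℝ) :
    |(derivative^[k] (Chebyshev.T ℝ n)).eval x| ≤ k ! * (2 * |x| + 3) ^ n.natAbs := by
  rw [← Chebyshev.T_natAbs]
  generalize n.natAbs = n
  induction n using Nat.twoStepInduction generalizing k with
  | zero => cases k <;> simp [iterate_derivative_one]
  | one =>
    rcases k with - | - | k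
    · simpa using (by linarith [abs_nonneg x] : |x| ≤ 2 * |x| + 3)
    · simpa using (by linarith [abs_nonneg x] : (1 : ℝ) ≤ 2 * |x| + 3)
    · simpa [iterate_derivative_X] using by positivity
  | more n h₀ h₁ =>
    have hpred : (k : ℝ) * |(derivative^[k - 1] (Chebyshev.T ℝ (n + 1 : ℕ))).eval x| ≤
        k ! * (2 * |x| + 3) ^ (n + 1) := by
      rcases k with - | k
      · simpa using by positivity
      · rw [Nat.factorial_succ, Nat.cast_mul, mul_assoc]
        exact mul_le_mul_of_nonneg_left (h₁ k) (Nat.cast_nonneg _)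
    have hpow : (2 * |x| + 3) ^ n ≤ (2 * |x| + 3) ^ (n + 1) :=
      pow_le_pow_right₀ (by linarith [abs_nonneg x]) n.le_succ
    rw [iterate_derivative_chebyshev_T_add_two]
    simp only [eval_sub, eval_mul, eval_add, eval_natCast, eval_X, eval_ofNat, nsmul_eq_mul]
    calc |2 * ((derivative^[k] (Chebyshev.T ℝ (n + 1 : ℕ))).eval x * x +
            k * (derivative^[k - 1] (Chebyshev.T ℝ (n + 1 : ℕ))).eval x) -
            (derivative^[k] (Chebyshev.T ℝ n)).eval x|
        ≤ 2 * (|(derivative^[k] (Chebyshev.T ℝ (n + 1 : ℕ))).eval x| * |x| +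
            k * |(derivative^[k - 1] (Chebyshev.T ℝ (n + 1 : ℕ))).eval x|) +
            |(derivative^[k] (Chebyshev.T ℝ n)).eval x| := by
          refine (abs_sub _ _).trans ?_
          rw [abs_mul, abs_two]
          gcongr
          refine (abs_add_le _ _).trans_eq ?_
          rw [abs_mul, abs_mul, Nat.abs_cast]
      _ ≤ 2 * (k ! * (2 * |x| + 3) ^ (n + 1) * |x| + k ! * (2 * |x| + 3) ^ (n + 1)) +
            k ! * (2 * |x| + 3) ^ (n + 1) := by
          gcongr
          · exact h₁ k
          · exact (h₀ k).trans (by gcongr)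
      _ = k ! * (2 * |x| + 3) ^ (n + 2) := by ring

theorem summable_exp_neg_mul_sq_mul_pow {t : ℝ} (ht : 0 < t) {A : ℝ} (hA : 0 < A) :
    Summable fun n : ℤ ↦ exp (-(t * n ^ 2)) * A ^ n.natAbs := by
  refine (summable_pow_mul_jacobiTheta₂_term_bound (log A / (2 * π)) (div_pos ht pi_pos) 0).congr
    fun n ↦ ?_
  rw [pow_zero, one_mul, ← Real.rpow_natCast A, rpow_def_of_pos hA, ← exp_add, Nat.cast_natAbs]
  congr 1
  field_simp
  ring

/-- The `k`-th derivative of `x ↦ ∑ n : ℤ, exp (-t n²) T_n(x)`, a theta function which at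
`x = cosh δ` is `∑ n : ℤ, exp (-t n²) cosh (n δ)`. -/
noncomputable def chebyshevTheta (k : ℕ) (t x : ℝ) : ℝ :=
  ∑' n : ℤ, exp (-(t * n ^ 2)) * (derivative^[k] (Chebyshev.T ℝ n)).eval x

section ChebyshevTheta

variable {t : ℝ}

theorem summable_chebyshevTheta (ht : 0 < t) (k : ℕ) (x : ℝ) :
    Summable fun n : ℤ ↦ exp (-(t * n ^ 2)) * (derivative^[k] (Chebyshev.T ℝ n)).eval x := by
  refine .of_norm_bounded ((summable_exp_neg_mul_sq_mul_pow ht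
    (A := 2 * |x| + 3) (by positivity)).mul_left (k ! : ℝ)) fun n ↦ ?_
  rw [norm_mul, norm_of_nonneg (exp_pos _).le, mul_left_comm]
  gcongr
  exact abs_eval_iterate_derivative_chebyshev_T_le k n x

theorem hasDerivAt_chebyshevTheta (ht : 0 < t) (k : ℕ) (x : ℝ) :
    HasDerivAt (chebyshevTheta k t) (chebyshevTheta (k + 1) t x) x := by
  have hx : x ∈ Metric.ball (0 : ℝ) (|x| + 1) := by simp
  refine hasDerivAt_tsum_of_isPreconnected
    (u := fun n : ℤ ↦ (k + 1)! * (exp (-(t * n ^ 2)) * (2 * (|x| + 1) + 3) ^ n.natAbs))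
    ((summable_exp_neg_mul_sq_mul_pow ht (by positivity)).mul_left _) Metric.isOpen_ball
    (convex_ball _ _).isPreconnected
    (fun n y _ ↦ (Polynomial.hasDerivAt _ y).const_mul _) (fun n y hy ↦ ?_) hx
    (summable_chebyshevTheta ht k x) hx |>.congr_deriv ?_
  · have hy' : |y| ≤ |x| + 1 := (mem_ball_zero_iff.1 hy).le
    rw [← Function.iterate_succ_apply' derivative, norm_mul, norm_of_nonneg (exp_pos _).le,
      mul_left_comm]
    gcongr
    refine (abs_eval_iterate_derivative_chebyshev_T_le (k + 1) n y).trans ?_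
    gcongr
  · simp only [chebyshevTheta, Function.iterate_succ_apply']

theorem chebyshevTheta_succ (ht : 0 < t) (l : ℕ) (x : ℝ) :
    chebyshevTheta (l + 1) t x = 2 ^ (l + 1) * l ! *
      ∑' m : ℕ, (m + l + 1) * exp (-(t * (m + l + 1) ^ 2)) * (gegenbauer ℝ l m).eval x := by
  let f (n : ℤ) : ℝ := exp (-(t * n ^ 2)) * (derivative^[l + 1] (Chebyshev.T ℝ n)).eval x
  have hf : Summable f := summable_chebyshevTheta ht (l + 1) x
  have hf_even : f.Even := fun n ↦ by simp [f, Chebyshev.T_neg]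
  have hf_lt (n : ℕ) (hn : n < l + 1) : f n = 0 := by
    have hdeg : (Chebyshev.T ℝ n).natDegree < l + 1 := by simpa [Chebyshev.natDegree_T] using hn
    simp only [f, iterate_derivative_eq_zero hdeg, eval_zero, mul_zero]
  have hf_add (m : ℕ) : f (m + l + 1 : ℕ) = 2 ^ l * l ! *
      ((m + l + 1) * exp (-(t * (m + l + 1) ^ 2)) * (gegenbauer ℝ l m).eval x) := by
    simp only [f, iterate_derivative_chebyshev_T, eval_mul, eval_natCast]
    push_cast
    ring
  have hf_succ : Summable fun n : ℕ ↦ f (n + 1 : ℕ) :=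
    hf.comp_injective fun m n h ↦ by simpa using h
  calc ∑' n, f n = 2 * ∑' n : ℕ, f (n + 1 : ℕ) := by
        rw [tsum_int_eq_zero_add_two_mul_tsum_pnat hf_even hf,
          tsum_pnat_eq_tsum_succ (f := fun n : ℕ ↦ f n), ← Nat.cast_zero, hf_lt 0 l.succ_pos,
          zero_add, nsmul_eq_mul, Nat.cast_ofNat]
    _ = 2 * ∑' m : ℕ, f (m + l + 1 : ℕ) := by
        rw [← hf_succ.sum_add_tsum_nat_add l, Finset.sum_eq_zero fun n hn ↦
          hf_lt _ (Nat.succ_lt_succ (Finset.mem_range.1 hn)), zero_add]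
    _ = _ := by simp_rw [hf_add, tsum_mul_left]; ring

end ChebyshevTheta

/-! ### Poisson summation -/

theorem hasSum_exp_neg_mul_sq_mul_cosh {t : ℝ} (ht : 0 < t) (δ : ℝ) :
    HasSum (fun n : ℤ ↦ exp (-(t * n ^ 2)) * cosh (n * δ))
      (exp (δ ^ 2 / (4 * t)) * HurwitzZeta.evenKernel (δ / (2 * t) : ℝ) (t / π)) := by
  have hplus := HurwitzZeta.hasSum_int_evenKernel (δ / (2 * t)) (div_pos ht pi_pos)
  have hminus := HurwitzZeta.hasSum_int_evenKernel (-(δ / (2 * t))) (div_pos ht pi_pos)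
  rw [AddCircle.coe_neg, HurwitzZeta.evenKernel_neg] at hminus
  convert! (hplus.add hminus).mul_left (exp (δ ^ 2 / (4 * t)) / 2) using 1
  · ext n
    rw [cosh_eq, mul_add, div_mul_eq_mul_div, div_mul_eq_mul_div, ← exp_add, ← exp_add, ← add_div,
      mul_div_assoc', mul_add, ← exp_add, ← exp_add, add_comm (exp _)]
    congr 3 <;> field_simp <;> ring
  · ring

theorem sqrt_mul_exp_mul_chebyshevTheta_zero {t : ℝ} (ht : 0 < t) (δ : ℝ) :
    √(t / π) * exp (-(δ ^ 2 / (4 * t))) * chebyshevTheta 0 t (cosh δ) =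
      HurwitzZeta.cosKernel (δ / (2 * t) : ℝ) (π / t) := by
  have hsum := (hasSum_exp_neg_mul_sq_mul_cosh ht δ).tsum_eq
  have hsqrt : √(t / π) ≠ 0 := (sqrt_pos.2 (div_pos ht pi_pos)).ne'
  simp only [chebyshevTheta, Function.iterate_zero, id_eq, Chebyshev.T_real_cosh, hsum]
  rw [HurwitzZeta.evenKernel_functional_equation, ← sqrt_eq_rpow, one_div_div, exp_neg]
  field_simp

/-! ### The theta series in the variable `u = δ²` -/

/-- The `k`-th derivative of the Chebyshev theta series at `cosh √u`, rescaled so that it tends to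
`1` as `t → 0`. -/
noncomputable def scaledTheta (k : ℕ) (t u : ℝ) : ℝ :=
  √(t / π) * exp (-(u / (4 * t))) * (4 * t * coshSqrt 1 u) ^ k * chebyshevTheta k t (coshSqrt 0 u)

theorem hasDerivAt_scaledTheta (k : ℕ) {t u : ℝ} (ht : 0 < t) (hu : 0 ≤ u) :
    HasDerivAt (scaledTheta k t)
      ((scaledTheta (k + 1) t u - scaledTheta k t u) / (4 * t) +
        k * coshSqrtRatio 1 u * scaledTheta k t u) u := by
  have hexp : HasDerivAt (fun u ↦ exp (-(u / (4 * t)))) (exp (-(u / (4 * t))) * -(1 / (4 * t))) u :=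
    ((hasDerivAt_id u).div_const (4 * t)).neg.exp
  have hpow := ((hasDerivAt_coshSqrt 1 u).const_mul (4 * t)).pow k
  have htheta := (hasDerivAt_chebyshevTheta ht k (coshSqrt 0 u)).comp u (hasDerivAt_coshSqrt 0 u)
  refine (((hexp.const_mul √(t / π)).mul hpow).mul htheta).congr_deriv ?_
  have hpos : coshSqrt 1 u ≠ 0 := (coshSqrt_pos 1 hu).ne'
  have hratio : coshSqrt 2 u = coshSqrtRatio 1 u * coshSqrt 1 u := by
    rw [coshSqrtRatio, div_mul_cancel₀ _ hpos]
  have hpred : k * (4 * t * coshSqrt 1 u) ^ (k - 1) * (4 * t * coshSqrt 2 u) =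
      k * coshSqrtRatio 1 u * (4 * t * coshSqrt 1 u) ^ k := by
    rcases k with - | k
    · simp
    · rw [Nat.add_sub_cancel, hratio, pow_succ]
      ring
  simp only [scaledTheta, pow_succ, hpred, Function.comp_apply, Pi.mul_apply, Pi.pow_apply]
  field_simp
  ring

theorem hasSum_scaledTheta_zero_sub_one {t u : ℝ} (ht : 0 < t) (hu : 0 ≤ u) :
    HasSum (fun n : ℕ ↦ 2 * exp (-((π * (n + 1)) ^ 2 / t)) *
      coshSqrt 0 (-((π * (n + 1) / t) ^ 2 * u))) (scaledTheta 0 t u - 1) := by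
  obtain ⟨δ, rfl⟩ : ∃ δ, u = δ ^ 2 := ⟨√u, (sq_sqrt hu).symm⟩
  have hkernel := HurwitzZeta.hasSum_nat_cosKernel₀ (δ / (2 * t)) (div_pos pi_pos ht)
  rw [scaledTheta, pow_zero, mul_one, coshSqrt_zero_sq, sqrt_mul_exp_mul_chebyshevTheta_zero ht]
  convert! hkernel using 2 with n
  rw [← mul_pow, coshSqrt_zero_neg_sq, mul_right_comm]
  congr 2
  · congr 1; field_simp
  · field_simp

theorem isBigO_exp_neg_mul_one_add_pow (m k : ℕ) :
    (fun s : ℝ ↦ exp (-s) * (1 + s) ^ m) =O[𝓟 (Ioi 0)] fun s ↦ (s ^ k)⁻¹ := by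
  refine isBigO_principal.2 ⟨(m + k)! * exp 1, fun s (hs : 0 < s) ↦ ?_⟩
  rw [norm_of_nonneg (by positivity), norm_of_nonneg (by positivity), ← div_eq_mul_inv,
    le_div_iff₀ (by positivity), exp_neg, mul_assoc, inv_mul_le_iff₀ (exp_pos s)]
  calc (1 + s) ^ m * s ^ k ≤ (1 + s) ^ (m + k) := by rw [pow_add]; gcongr; linarith
    _ ≤ (m + k)! * exp (1 + s) :=
      (div_le_iff₀' (by positivity)).1 (pow_div_factorial_le_exp _ (by positivity) _)
    _ = exp s * ((m + k)! * exp 1) := by rw [exp_add]; ring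

theorem isBigO_exp_neg_sq_div_mul_one_add_sq_pow (m : ℕ) :
    (fun p : ℕ × ℝ ↦ exp (-((π * (p.1 + 1)) ^ 2 / p.2)) * (1 + (π * (p.1 + 1) / p.2) ^ 2) ^ m)
      =O[𝓟 (univ ×ˢ Ioi 0)] fun p ↦ 1 / ((p.1 + 1 : ℕ) : ℝ) ^ 2 * p.2 ^ 2 := by
  have htendsto : Tendsto (fun p : ℕ × ℝ ↦ π * (p.1 + 1) / p.2) (𝓟 (univ ×ˢ Ioi 0))
      (𝓟 (Ioi 0)) := tendsto_principal_principal.2 fun p hp ↦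
    div_pos (mul_pos pi_pos p.1.cast_add_one_pos) (mem_Ioi.1 hp.2)
  have hdecay := (isBigO_exp_neg_mul_one_add_pow (2 * m) 2).comp_tendsto htendsto
  refine (IsBigO.of_bound' (eventually_principal.2 fun p hp ↦ ?_)).trans (hdecay.trans
    (IsBigO.of_bound' (eventually_principal.2 fun p hp ↦ ?_)))
  · have ht : 0 < p.2 := hp.2
    have hone : 1 ≤ π * (p.1 + 1) := by nlinarith [pi_gt_three, (p.1.cast_nonneg : (0 : ℝ) ≤ p.1)]
    have hs : 0 < π * (p.1 + 1) / p.2 := by positivity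
    rw [Function.comp_apply, norm_of_nonneg (by positivity), norm_of_nonneg (by positivity),
      pow_mul]
    gcongr
    · nlinarith
    · nlinarith
  · have ht : 0 < p.2 := hp.2
    rw [Function.comp_apply, norm_of_nonneg (by positivity), norm_of_nonneg (by positivity),
      Nat.cast_add_one, div_pow, inv_div, mul_pow, one_div_mul_eq_div]
    gcongr
    exact le_mul_of_one_le_left (by positivity) (one_le_pow₀ (by linarith [pi_gt_three]))

theorem derivIsBigO_scaledTheta_zero_sub_one (n : ℕ) :
    DerivIsBigO (Ioi 0) (Ioi 0) n (fun t u ↦ scaledTheta 0 t u - 1) fun t ↦ t ^ 2 := by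
  have hmaps : MapsTo (fun p : ℕ × ℝ ↦ (π * (p.1 + 1) / p.2) ^ 2) (univ ×ˢ Ioi 0) (Ici 0) :=
    fun p _ ↦ mem_Ici.2 (sq_nonneg _)
  have hcoeff : (fun p : ℕ × ℝ ↦ 2 * exp (-((π * (p.1 + 1)) ^ 2 / p.2))) =O[𝓟 (univ ×ˢ Ioi 0)]
      fun p ↦ exp (-((π * (p.1 + 1)) ^ 2 / p.2)) := (isBigO_refl _ _).const_mul_left 2
  have hterm := ((DerivIsBigO.const hcoeff).mul
    ((derivIsBigO_coshSqrt_neg_mul 0 n).comp hmaps)).trans_isBigO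
      (isBigO_exp_neg_sq_div_mul_one_add_sq_pow n)
  have hsummable : Summable fun m : ℕ ↦ 1 / ((m + 1 : ℕ) : ℝ) ^ 2 :=
    (summable_nat_add_iff 1).2 (summable_one_div_nat_pow.2 one_lt_two)
  refine DerivIsBigO.congr isOpen_Ioi (fun t ht u hu ↦ ?_)
    (DerivIsBigO.tsum (F := fun (m : ℕ) t u ↦ 2 * exp (-((π * (m + 1)) ^ 2 / t)) *
      coshSqrt 0 (-((π * (m + 1) / t) ^ 2 * u))) isOpen_Ioi isPreconnected_Ioi hsummable hterm)
  exact (hasSum_scaledTheta_zero_sub_one ht (mem_Ioi.1 hu).le).tsum_eq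

theorem derivIsBigO_scaledTheta_sub (t₀ : ℝ) (k n : ℕ) :
    DerivIsBigO (Ioc 0 t₀) (Ioi 0) n
      (fun t u ↦ scaledTheta k t u - (1 - 4 * k.choose 2 * t * coshSqrtRatio 1 u))
      fun t ↦ t ^ 2 := by
  induction k generalizing n with
  | zero =>
    simpa using (derivIsBigO_scaledTheta_zero_sub_one n).comp
      (k := id) (fun t (ht : t ∈ Ioc 0 t₀) ↦ ht.1)
  | succ k ih =>
    obtain ⟨-, R', hR', hR'O⟩ := ih (n + 1)
    have hconst (c : ℝ) : (fun _ ↦ c) =O[𝓟 (Ioc 0 t₀)] fun _ : ℝ ↦ (1 : ℝ) :=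
      isBigO_const_one _ _ _
    have hr (j : ℕ) := derivIsBigO_coshSqrtRatio (Ioc 0 t₀) j n
    have hlin : (fun t : ℝ ↦ 4 * t) =O[𝓟 (Ioc 0 t₀)] fun _ ↦ (1 : ℝ) :=
      isBigO_principal.2 ⟨4 * t₀, fun t ht ↦ by
        rw [norm_of_nonneg (by linarith [ht.1]), norm_one]; linarith [ht.2]⟩
    have hquad : (fun t : ℝ ↦ 16 * k.choose 2 * t ^ 2) =O[𝓟 (Ioc 0 t₀)] fun t ↦ t ^ 2 :=
      (isBigO_refl _ _).const_mul_left _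
    have hfirst := (DerivIsBigO.const hlin).mul
      (hR'O.sub (by simpa using ((DerivIsBigO.const (hconst k)).mul (hr 1)).mul (ih n)))
    have hsecond := (DerivIsBigO.const hquad).mul ((hr 2).sub
      (by simpa using (DerivIsBigO.const (hconst (k + 1))).mul ((hr 1).mul (hr 1))))
    refine DerivIsBigO.congr isOpen_Ioi (fun t ht u hu ↦ ?_)
      (((ih n).add (by simpa using hfirst)).sub (by simpa using hsecond))
    have hu₀ : 0 ≤ u := (mem_Ioi.1 hu).le
    have hderiv := (hR' t ht u hu).unique
      ((hasDerivAt_scaledTheta k ht.1 hu₀).sub <|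
        ((hasDerivAt_coshSqrtRatio 1 hu₀).const_mul (4 * k.choose 2 * t)).const_sub 1)
    have ht₀ : t ≠ 0 := ht.1.ne'
    rw [hderiv, Nat.choose_succ_succ' k 1, Nat.choose_one_right]
    push_cast
    field_simp
    ring

/-! ### Heat kernels of odd-dimensional spheres -/

/-- The radial heat kernel of the round sphere `S^{2l+3}` as a function of the cosine `x` of the
distance, extended to all real `x`. -/
noncomputable def oddSphereHeatKernel (l : ℕ) (t x : ℝ) : ℝ :=
  l ! / (2 * π ^ (l + 2)) * ∑' m : ℕ,
    (m + l + 1) * exp (-((m * (m + 2 * (l + 1)) : ℕ) : ℝ) * t) * (gegenbauer ℝ l m).eval x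

theorem qS11_eq_oddSphereHeatKernel : qS11 = oddSphereHeatKernel 4 := by
  ext t x
  have hgamma : Gamma 5 = 4 ! := mod_cast Gamma_nat_eq_factorial 4
  simp only [qS11, oddSphereHeatKernel, eval_gegenbauer_four, hgamma, add_assoc]
  norm_num

theorem oddSphereHeatKernel_eq_chebyshevTheta (l : ℕ) {t : ℝ} (ht : 0 < t) (x : ℝ) :
    oddSphereHeatKernel l t x =
      exp ((l + 1) ^ 2 * t) * chebyshevTheta (l + 1) t x / (2 * π) ^ (l + 2) := by
  have hexp (m : ℕ) : exp (-((m * (m + 2 * (l + 1)) : ℕ) : ℝ) * t) =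
      exp ((l + 1) ^ 2 * t) * exp (-(t * (m + l + 1) ^ 2)) := by
    rw [← exp_add]
    push_cast
    ring_nf
  simp_rw [oddSphereHeatKernel, chebyshevTheta_succ ht, hexp,
    mul_left_comm _ (exp ((l + 1) ^ 2 * t)), mul_assoc (exp ((l + 1) ^ 2 * t)), tsum_mul_left]
  field_simp
  ring

theorem mul_oddSphereHeatKernel_cosh (l : ℕ) {t δ : ℝ} (ht : 0 < t) (hδ : δ ≠ 0) :
    (4 * π * t) ^ ((2 * l + 3 : ℝ) / 2) * (sinh δ / δ) ^ (l + 1) * exp (-δ ^ 2 / (4 * t)) *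
        oddSphereHeatKernel l t (cosh δ) =
      exp ((l + 1) ^ 2 * t) * scaledTheta (l + 1) t (δ ^ 2) := by
  have hrpow : (4 * π * t) ^ ((2 * l + 3 : ℝ) / 2) =
      (4 * π * t) ^ (l + 1) * (2 * π * √(t / π)) := by
    rw [show (2 * l + 3 : ℝ) / 2 = (l + 1 : ℕ) + 1 / 2 by push_cast; ring,
      rpow_add (by positivity), rpow_natCast, ← sqrt_eq_rpow,
      show 4 * π * t = (2 * π) ^ 2 * (t / π) by field_simp; ring, sqrt_mul (by positivity),
      sqrt_sq (by positivity)]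
  have hsinh : sinh δ / δ = 2 * coshSqrt 1 (δ ^ 2) := by
    rw [← two_mul_coshSqrt_one_sq]
    field_simp
  rw [hrpow, hsinh, oddSphereHeatKernel_eq_chebyshevTheta l ht, scaledTheta, coshSqrt_zero_sq,
    neg_div]
  simp only [mul_pow, pow_succ]
  field_simp

theorem isBigO_exp_mul_sub_one_sub (a t₀ : ℝ) :
    (fun t ↦ exp (a * t) - 1 - a * t) =O[𝓟 (Ioc 0 t₀)] fun t ↦ t ^ 2 := by
  refine isBigO_principal.2 ⟨a ^ 2 * exp (|a| * t₀), fun t ht ↦ ?_⟩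
  have htaylor : ‖exp (a * t) - 1 - a * t‖ ≤ (|a| * |t|) ^ 2 * exp (|a| * |t|) := by
    have h := Complex.norm_exp_sub_sum_le_norm_mul_exp (a * t : ℝ) 2
    rw [Finset.sum_range_succ, Finset.sum_range_one] at h
    norm_num [← sub_sub] at h
    exact_mod_cast h
  calc ‖exp (a * t) - 1 - a * t‖ ≤ (|a| * |t|) ^ 2 * exp (|a| * |t|) := htaylor
    _ = t ^ 2 * a ^ 2 * exp (|a| * t) := by rw [mul_pow, sq_abs, sq_abs, abs_of_pos ht.1]; ring
    _ ≤ t ^ 2 * a ^ 2 * exp (|a| * t₀) := by gcongr; exact ht.2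
    _ = a ^ 2 * exp (|a| * t₀) * ‖t ^ 2‖ := by rw [norm_of_nonneg (sq_nonneg t)]; ring

theorem isBigO_exp_mul_scaledTheta_sub (t₀ : ℝ) (k : ℕ) :
    (fun p : ℝ × ℝ ↦ exp (k ^ 2 * p.1) * scaledTheta k p.1 p.2 - 1 -
        (k ^ 2 - 4 * k.choose 2 * coshSqrtRatio 1 p.2) * p.1)
      =O[𝓟 (Ioc 0 t₀ ×ˢ Ioi 0)] fun p ↦ p.1 ^ 2 := by
  have hfst : Tendsto Prod.fst (𝓟 (Ioc 0 t₀ ×ˢ Ioi (0 : ℝ))) (𝓟 (Ioc 0 t₀)) :=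
    tendsto_principal_principal.2 fun p hp ↦ hp.1
  have hratio : (fun p : ℝ × ℝ ↦ coshSqrtRatio 1 p.2) =O[𝓟 (Ioc 0 t₀ ×ˢ Ioi 0)]
      fun _ ↦ (1 : ℝ) :=
    isBigO_principal.2 ⟨1, fun p hp ↦ by
      simpa using abs_coshSqrtRatio_le_one 1 (mem_Ioi.1 hp.2).le⟩
  have hbdd {f : ℝ → ℝ} (hf : Continuous f) :
      (fun p : ℝ × ℝ ↦ f p.1) =O[𝓟 (Ioc 0 t₀ ×ˢ Ioi 0)] fun _ ↦ (1 : ℝ) := by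
    obtain ⟨c, hc⟩ := isCompact_Icc.exists_bound_of_continuousOn (s := Icc 0 t₀) hf.continuousOn
    exact isBigO_principal.2 ⟨c, fun p hp ↦ by
      simpa using hc p.1 (Ioc_subset_Icc_self hp.1)⟩
  have htheta := (hbdd (f := fun t ↦ exp (k ^ 2 * t)) (by fun_prop)).mul
    (derivIsBigO_scaledTheta_sub t₀ k 0).isBigO
  have hexp := (isBigO_exp_mul_sub_one_sub (k ^ 2) t₀).comp_tendsto hfst
  have hmain := (hbdd (f := fun _ ↦ 1) continuous_const).sub
    (((hbdd (f := fun t ↦ 4 * k.choose 2 * t) (by fun_prop)).mul hratio).congr_right fun _ ↦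
      mul_one 1)
  have hquad := (hratio.const_mul_left (4 * k.choose 2 * k ^ 2)).mul
    (isBigO_refl (fun p : ℝ × ℝ ↦ p.1 ^ 2) _)
  refine ((htheta.add (hmain.mul hexp)).sub hquad).congr (fun p ↦ ?_) fun p ↦ one_mul _
  simp only [Function.comp_apply]
  ring

theorem qS11_small_time_cosh_general (l : ℕ) (t₀ : ℝ) :
    ∃ C > 0, ∀ t ∈ Ioc 0 t₀, ∀ δ ∈ Ioi (0 : ℝ),
      |(4 * π * t) ^ ((2 * l + 3 : ℝ) / 2) * (sinh δ / δ) ^ (l + 1) * exp (-δ ^ 2 / (4 * t)) *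
            oddSphereHeatKernel l t (cosh δ) - 1 -
          ((l + 1) ^ 2 + l * (l + 1) * (sinh δ - δ * cosh δ) / (δ ^ 2 * sinh δ)) * t|
        ≤ C * t ^ 2 := by
  obtain ⟨C, hC, hbound⟩ := (isBigO_exp_mul_scaledTheta_sub t₀ (l + 1)).exists_pos
  refine ⟨C, hC, fun t ht δ (hδ : 0 < δ) ↦ ?_⟩
  have hchoose : ((l + 1).choose 2 : ℝ) = l * (l + 1) / 2 := by
    rw [Nat.cast_choose_two]
    push_cast
    ring
  have h := isBigOWith_principal.1 hbound (t, δ ^ 2) ⟨ht, pow_pos hδ 2⟩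
  rw [norm_of_nonneg (sq_nonneg t), norm_eq_abs, hchoose, Nat.cast_add_one] at h
  rw [mul_oddSphereHeatKernel_cosh l ht.1 hδ.ne', mul_div_assoc,
    ← neg_two_mul_coshSqrtRatio_one hδ.ne']
  convert h using 5
  ring

/-- Uniform small-time asymptotics of the heat kernel of `S^11` at `cosh δ`, uniformly for
`δ ∈ (0, ∞)`. -/
theorem qS11_small_time_cosh :
    ∃ C > (0 : ℝ), ∃ t₀ > (0 : ℝ), ∀ t ∈ Set.Ioo (0 : ℝ) t₀, ∀ δ ∈ Set.Ioi (0 : ℝ),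
      |(4 * π * t) ^ ((11 : ℝ) / 2) * (Real.sinh δ / δ) ^ 5 * Real.exp (-δ ^ 2 / (4 * t)) *
            qS11 t (Real.cosh δ)
          - 1 - (25 + 20 * (Real.sinh δ - δ * Real.cosh δ) / (δ ^ 2 * Real.sinh δ)) * t|
        ≤ C * t ^ 2 := by
  obtain ⟨C, hC, h⟩ := qS11_small_time_cosh_general 4 1
  refine ⟨C, hC, 1, one_pos, fun t ht δ hδ ↦ ?_⟩
  convert h t ⟨ht.1, ht.2.le⟩ δ hδ using 7 <;> norm_num [qS11_eq_oddSphereHeatKernel]
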